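/- Let p be a real number with 0 ≤ p ≤ 1/4, and consider the probability space of infinite sequences (b_j)_{j≥1} of independent Bernoulli(p) bits. There exist an absolute constant C > 0 and, for each integer n ≥ 1, a deterministic adaptive strategy σ whose actions are of two kinds — inclusion queries Y ⊆ {1,…,n} and membership tests W ⊆ {1,…,n} — such that for every integer k ≥ 1 and every nonempty family F of subsets of {1,…,n} in which every member has at most k elements, the following holds. If the j-th inclusion query Y made by σ is answered YES exactly when (there exists W ∈ F with W ⊆ Y) and b_j = 0 (so false negatives occur independently with probability at most p and there are no false positives), and every membership test W is answered truthfully by the truth value of W ∈ F, then σ almost surely halts with output a member of F, and the expected total number of actions (inclusion queries plus membership tests) is at most C·k·log₂(2n). (Theorem 2 / Lemma 3: Las Vegas extraction with O(k log n) expected queries to a randomized inclusion oracle.) -/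

import Mathlib

open MeasureTheory

/-- An action of a deterministic adaptive strategy with two kinds of queries
over the universe `{1,…,n}` (modelled as `Fin n`): an inclusion query on a
subset `Y`, a membership test on a subset `W`, or halting with output `W`. -/
inductive RWEAction (n : ℕ) where
  | incl (Y : Finset (Fin n))
  | memTest (W : Finset (Fin n))
  | halt (W : Finset (Fin n))

/-- The state after `i` steps of running the strategy `σ` for the witness
family `F` with random bit sequence `ω`: the first component is the
transcript of Boolean answers received, the second is the number of inclusion
queries made so far. The `j`-th inclusion query `Y` (counting from `j = 0`)
is answered YES exactly when some `W ∈ F` satisfies `W ⊆ Y` and the Bernoulli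
bit `ω j` is `false` (so `ω j = true` produces a false negative, and false
positives never occur); a membership test `W` is answered truthfully by
whether `W ∈ F`. Once `σ` halts the state no longer changes. -/
def RWErun {n : ℕ} (σ : List Bool → RWEAction n) (F : Finset (Finset (Fin n)))
    (ω : ℕ → Bool) : ℕ → List Bool × ℕ
  | 0 => ([], 0)
  | i + 1 =>
    match σ (RWErun σ F ω i).1 with
    | RWEAction.incl Y =>
        ((RWErun σ F ω i).1 ++
          [decide (∃ W ∈ F, W ⊆ Y) && !(ω (RWErun σ F ω i).2)],
         (RWErun σ F ω i).2 + 1)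
    | RWEAction.memTest W => ((RWErun σ F ω i).1 ++ [decide (W ∈ F)], (RWErun σ F ω i).2)
    | RWEAction.halt _ => RWErun σ F ω i


def LVH {n : ℕ} {S : Type} (act : S → RWEAction n) (step : S → Bool → S)
    (F : Finset (Finset (Fin n))) : ℕ → S → (ℕ → Bool) → ℕ
  | 0, _, _ => 0
  | N + 1, s, ω =>
    match act s with
    | RWEAction.incl Y =>
        LVH act step F N (step s (decide (∃ W ∈ F, W ⊆ Y) && !(ω 0))) (fun i => ω (i + 1)) + 1
    | RWEAction.memTest W => LVH act step F N (step s (decide (W ∈ F))) ω + 1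
    | RWEAction.halt _ => 0

def LVsig {n : ℕ} {S : Type} (act : S → RWEAction n) (step : S → Bool → S) (s0 : S) :
    List Bool → RWEAction n := fun h => act (h.foldl step s0)

theorem LV_link {n : ℕ} {S : Type} (act : S → RWEAction n) (step : S → Bool → S) (s0 : S)
    (F : Finset (Finset (Fin n))) (ω : ℕ → Bool) (N : ℕ) : ∀ m : ℕ,
    LVH act step F N ((RWErun (LVsig act step s0) F ω m).1.foldl step s0)
      (fun i => ω (i + (RWErun (LVsig act step s0) F ω m).2)) < N →
    ∃ W, LVsig act step s0 (RWErun (LVsig act step s0) F ω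
      (m + LVH act step F N ((RWErun (LVsig act step s0) F ω m).1.foldl step s0)
      (fun i => ω (i + (RWErun (LVsig act step s0) F ω m).2)))).1 = RWEAction.halt W := by
  induction N with
  | zero => intro m h; omega
  | succ N ih =>
    intro m h
    have ih' := ih (m + 1)
    simp only [LVH] at h ⊢
    rcases hact : act ((RWErun (LVsig act step s0) F ω m).1.foldl step s0) with Y | W | W
    · have hs : LVsig act step s0 (RWErun (LVsig act step s0) F ω m).1 = RWEAction.incl Y := hact
      have hr : RWErun (LVsig act step s0) F ω (m + 1) =
         ((RWErun (LVsig act step s0) F ω m).1 ++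
          [decide (∃ W ∈ F, W ⊆ Y) && !(ω (RWErun (LVsig act step s0) F ω m).2)],
         (RWErun (LVsig act step s0) F ω m).2 + 1) := by
        rw [RWErun, hs]
      rw [hact] at h
      simp only at h ⊢
      rw [hr] at ih'
      simp only [List.foldl_append, List.foldl_cons, List.foldl_nil] at ih'
      simp only [Nat.zero_add] at h ⊢
      have e : (fun i => ω (i + 1 + (RWErun (LVsig act step s0) F ω m).2)) =
        (fun i => ω (i + ((RWErun (LVsig act step s0) F ω m).2 + 1))) := by
        funext i; congr 1; omega
      rw [e] at h ⊢
      have := ih' (by omega)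
      rw [show ∀ a, m + (a + 1) = m + 1 + a by intro a; omega]
      exact this
    · have hs : LVsig act step s0 (RWErun (LVsig act step s0) F ω m).1 = RWEAction.memTest W := hact
      have hr : RWErun (LVsig act step s0) F ω (m + 1) =
         ((RWErun (LVsig act step s0) F ω m).1 ++ [decide (W ∈ F)],
         (RWErun (LVsig act step s0) F ω m).2) := by
        rw [RWErun, hs]
      rw [hact] at h
      simp only at h ⊢
      rw [hr] at ih'
      simp only [List.foldl_append, List.foldl_cons, List.foldl_nil] at ih'
      have := ih' (by omega)
      rw [show ∀ a, m + (a + 1) = m + 1 + a by intro a; omega]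
      exact this
    · exact ⟨W, hact⟩

theorem LVH_le_succ {n : ℕ} {S : Type} (act : S → RWEAction n) (step : S → Bool → S)
    (F : Finset (Finset (Fin n))) (N : ℕ) : ∀ (s : S) (ω : ℕ → Bool),
    LVH act step F N s ω ≤ LVH act step F (N + 1) s ω := by
  induction N with
  | zero => intro s ω; simp [LVH]
  | succ N ih =>
    intro s ω
    rw [LVH, LVH]
    rcases act s with Y | W | W
    · simpa using ih _ _
    · simpa using ih _ _
    · simp

theorem LVH_meas {n : ℕ} {S : Type} (act : S → RWEAction n) (step : S → Bool → S)
    (F : Finset (Finset (Fin n))) (N : ℕ) : ∀ (s : S),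
    Measurable (LVH act step F N s) := by
  induction N with
  | zero => intro s; exact measurable_const
  | succ N ih =>
    intro s
    have hsh : Measurable (fun (ω : ℕ → Bool) (i : ℕ) => ω (i + 1)) := by fun_prop
    rcases hact : act s with Y | W | W
    · have : LVH act step F (N + 1) s = fun ω =>
        if ω 0 = true then LVH act step F N (step s false) (fun i => ω (i + 1)) + 1
        else LVH act step F N (step s (decide (∃ W ∈ F, W ⊆ Y))) (fun i => ω (i + 1)) + 1 := by
        funext ω
        rw [LVH, hact]
        cases ω 0 <;> simp
      rw [this]
      refine Measurable.ite (measurableSet_eq_fun (by fun_prop) (by fun_prop)) ?_ ?_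
      · exact ((ih _).comp hsh).add_const 1
      · exact ((ih _).comp hsh).add_const 1
    · have : LVH act step F (N + 1) s = fun ω =>
        LVH act step F N (step s (decide (W ∈ F))) ω + 1 := by
        funext ω
        rw [LVH, hact]
      rw [this]
      exact (ih _).add_const 1
    · have : LVH act step F (N + 1) s = fun ω => 0 := by
        funext ω
        rw [LVH, hact]
      rw [this]
      exact measurable_const

def LVcons (b : Bool) (ω : ℕ → Bool) : ℕ → Bool
  | 0 => b
  | i + 1 => ω i

theorem LVcons_meas (b : Bool) : Measurable (LVcons b) := by
  rw [measurable_pi_iff]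
  intro i
  cases i with
  | zero => exact measurable_const
  | succ i => exact measurable_pi_apply i

def LVcyl : Set (Set (ℕ → Bool)) :=
  {A | ∃ (N : ℕ) (v : ℕ → Bool), A = {ω | ∀ j ∈ Finset.range N, ω j = v j}}

theorem LVcyl_pi : IsPiSystem LVcyl := by
  rintro A ⟨N, v, rfl⟩ B ⟨M, w, rfl⟩ ⟨ω₀, h1, h2⟩
  refine ⟨max N M, ω₀, ?_⟩
  ext ω
  simp only [Finset.mem_range, Set.mem_ofPred_eq, Set.mem_inter_iff, lt_max_iff] at *
  constructor
  · rintro ⟨a, b⟩ j (hj | hj)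
    · rw [a j hj, h1 j hj]
    · rw [b j hj, h2 j hj]
  · intro a
    exact ⟨fun j hj => by rw [a j (Or.inl hj), h1 j hj],
      fun j hj => by rw [a j (Or.inr hj), h2 j hj]⟩

theorem LVcyl_gen : (MeasurableSpace.pi : MeasurableSpace (ℕ → Bool)) =
    MeasurableSpace.generateFrom LVcyl := by
  apply le_antisymm
  · refine iSup_le fun j => ?_
    rintro A ⟨B, -, rfl⟩
    have : (fun ω : ℕ → Bool => ω j) ⁻¹' B =
      ⋃ (v : Fin (j + 1) → Bool), ⋃ (_ : v (Fin.last j) ∈ B),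
        {ω : ℕ → Bool | ∀ i ∈ Finset.range (j + 1),
          ω i = (fun i => if h : i < j + 1 then v ⟨i, h⟩ else false) i} := by
      ext ω
      simp only [Set.mem_preimage, Set.mem_iUnion, Set.mem_ofPred_eq, Finset.mem_range]
      constructor
      · intro h
        refine ⟨fun i => ω i, by simpa using h, ?_⟩
        intro i hi
        simp [hi]
      · rintro ⟨v, hv, h⟩
        have := h j (by omega)
        simp only [Nat.lt_succ_self, dite_true] at this
        rw [this]
        exact hv
    change @MeasurableSet _ (MeasurableSpace.generateFrom LVcyl) ((fun ω : ℕ → Bool => ω j) ⁻¹' B)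
    rw [this]
    refine MeasurableSet.iUnion fun v => MeasurableSet.iUnion fun _ => ?_
    exact MeasurableSpace.measurableSet_generateFrom ⟨_, _, rfl⟩
  · refine MeasurableSpace.generateFrom_le ?_
    rintro A ⟨N, v, rfl⟩
    have : {ω : ℕ → Bool | ∀ j ∈ Finset.range N, ω j = v j} =
      ⋂ j ∈ Finset.range N, {ω | ω j = v j} := by
      ext ω; simp
    rw [this]
    refine Finset.measurableSet_biInter _ fun j _ => ?_
    exact measurableSet_eq_fun (by fun_prop) (by fun_prop)

theorem LV_decomp (p : ℝ) (μ : Measure (ℕ → Bool)) [IsProbabilityMeasure μ] (hp0 : 0 ≤ p)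
    (hp1 : p ≤ 1)
    (hμ : ∀ (s : Finset ℕ) (v : ℕ → Bool),
                  μ {ω | ∀ j ∈ s, ω j = v j} =
                    ∏ j ∈ s, ENNReal.ofReal (if v j then p else 1 - p)) :
    μ = ENNReal.ofReal p • μ.map (LVcons true) + ENNReal.ofReal (1 - p) • μ.map (LVcons false) := by
  have hcm : ∀ A ∈ LVcyl, MeasurableSet A := by
    intro A hA
    rw [LVcyl_gen]
    exact MeasurableSpace.measurableSet_generateFrom hA
  have hsum : ENNReal.ofReal p + ENNReal.ofReal (1 - p) = 1 := by
    rw [← ENNReal.ofReal_add hp0 (by linarith)]; simp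
  refine ext_of_generate_finite LVcyl LVcyl_gen LVcyl_pi ?_ ?_
  · rintro A hA
    have hA' := hcm A hA
    obtain ⟨N, v, rfl⟩ := hA
    rw [Measure.add_apply, Measure.smul_apply, Measure.smul_apply,
      Measure.map_apply (LVcons_meas _) hA', Measure.map_apply (LVcons_meas _) hA']
    cases N with
    | zero => simp [hsum]
    | succ N =>
      have key : ∀ b, LVcons b ⁻¹' {ω | ∀ j ∈ Finset.range (N + 1), ω j = v j} =
        if b = v 0 then {ω | ∀ j ∈ Finset.range N, ω j = v (j + 1)} else ∅ := by
        intro b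
        ext ω
        simp only [Set.mem_preimage, Set.mem_ofPred_eq, Finset.mem_range]
        split_ifs with h
        · constructor
          · intro H j hj
            exact H (j + 1) (by omega)
          · intro H j hj
            cases j with
            | zero => exact h
            | succ j => exact H j (by omega)
        · simp only [Set.mem_empty_iff_false, iff_false]
          intro H
          exact h (H 0 (by omega))
      rw [key, key, hμ, Finset.prod_range_succ']
      have := hμ (Finset.range N) (fun j => v (j + 1))
      cases hv : v 0
      · rw [if_neg (by simp), if_pos rfl, this]
        simp [mul_comm]
      · simp only [Bool.false_eq_true, if_true, if_false]
        rw [this]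
        simp [mul_comm]
  · simp only [Measure.add_apply, Measure.smul_apply,
      Measure.map_apply (LVcons_meas _) MeasurableSet.univ, Set.preimage_univ, measure_univ]
    simp [hsum]

theorem LV_bound {n : ℕ} {S : Type} (act : S → RWEAction n) (step : S → Bool → S)
    (F : Finset (Finset (Fin n))) (p : ℝ) (μ : Measure (ℕ → Bool)) [IsProbabilityMeasure μ]
    (hp0 : 0 ≤ p) (hp1 : p ≤ 1)
    (hμ : ∀ (s : Finset ℕ) (v : ℕ → Bool),
                  μ {ω | ∀ j ∈ s, ω j = v j} =
                    ∏ j ∈ s, ENNReal.ofReal (if v j then p else 1 - p))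
    (Inv : S → Prop) (Φ : S → ℝ) (hΦ : ∀ s, Inv s → 0 ≤ Φ s)
    (hm : ∀ s W, Inv s → act s = RWEAction.memTest W →
      Inv (step s (decide (W ∈ F))) ∧ 1 + Φ (step s (decide (W ∈ F))) ≤ Φ s)
    (hi : ∀ s Y, Inv s → act s = RWEAction.incl Y →
      Inv (step s (decide (∃ W ∈ F, W ⊆ Y))) ∧ Inv (step s false) ∧
      1 + (p * Φ (step s false) + (1 - p) * Φ (step s (decide (∃ W ∈ F, W ⊆ Y)))) ≤ Φ s)
    (N : ℕ) : ∀ s, Inv s → ∫⁻ ω, (LVH act step F N s ω : ENNReal) ∂μ ≤ ENNReal.ofReal (Φ s) := by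
  have hmeas : ∀ N s, Measurable (fun ω => (LVH act step F N s ω : ENNReal)) := fun N s =>
    (measurable_from_top (f := fun k : ℕ => (k : ENNReal))).comp (LVH_meas act step F N s)
  induction N with
  | zero => intro s _; simp [LVH]
  | succ N ih =>
    intro s hs
    rcases hact : act s with Y | W | W
    · obtain ⟨h1, h2, h3⟩ := hi s Y hs hact
      rw [LV_decomp p μ hp0 hp1 hμ, lintegral_add_measure, lintegral_smul_measure,
        lintegral_smul_measure, lintegral_map (hmeas _ _) (LVcons_meas _),
        lintegral_map (hmeas _ _) (LVcons_meas _)]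
      have e1 : ∀ ω, (LVH act step F (N + 1) s (LVcons true ω) : ENNReal) =
          LVH act step F N (step s false) ω + 1 := by
        intro ω; rw [LVH, hact]; simp [LVcons]
      have e2 : ∀ ω, (LVH act step F (N + 1) s (LVcons false ω) : ENNReal) =
          LVH act step F N (step s (decide (∃ W ∈ F, W ⊆ Y))) ω + 1 := by
        intro ω; rw [LVH, hact]; simp [LVcons]
      simp only [e1, e2]
      rw [lintegral_add_right _ measurable_const, lintegral_add_right _ measurable_const]
      simp only [lintegral_const, measure_univ, mul_one, smul_eq_mul]
      calc _ ≤ ENNReal.ofReal p * (ENNReal.ofReal (Φ (step s false)) + ENNReal.ofReal 1) +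
            ENNReal.ofReal (1 - p) * (ENNReal.ofReal (Φ (step s (decide (∃ W ∈ F, W ⊆ Y))))
              + ENNReal.ofReal 1) := by
            rw [ENNReal.ofReal_one]
            gcongr
            · exact ih _ h2
            · exact ih _ h1
        _ ≤ _ := by
            have a1 := hΦ _ h1
            have a2 := hΦ _ h2
            rw [← ENNReal.ofReal_add a2 (by norm_num), ← ENNReal.ofReal_add a1 (by norm_num),
              ← ENNReal.ofReal_mul hp0, ← ENNReal.ofReal_mul (by linarith),
              ← ENNReal.ofReal_add (by positivity)
                (mul_nonneg (by linarith) (by linarith))]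
            apply ENNReal.ofReal_le_ofReal
            linarith
    · obtain ⟨h1, h3⟩ := hm s W hs hact
      have e1 : ∀ ω, (LVH act step F (N + 1) s ω : ENNReal) =
          LVH act step F N (step s (decide (W ∈ F))) ω + 1 := by
        intro ω; rw [LVH, hact]; simp
      simp only [e1]
      rw [lintegral_add_right _ measurable_const]
      simp only [lintegral_const, measure_univ, mul_one]
      calc _ ≤ ENNReal.ofReal (Φ (step s (decide (W ∈ F)))) + ENNReal.ofReal 1 := by
            rw [ENNReal.ofReal_one]
            gcongr
            exact ih _ h1
        _ ≤ _ := by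
            rw [← ENNReal.ofReal_add (hΦ _ h1) (by norm_num)]
            apply ENNReal.ofReal_le_ofReal
            linarith
    · have e1 : ∀ ω, (LVH act step F (N + 1) s ω : ENNReal) = 0 := by
        intro ω; rw [LVH, hact]; simp
      simp [e1]

theorem LV_inv {n : ℕ} {S : Type} (act : S → RWEAction n) (step : S → Bool → S) (s0 : S)
    (F : Finset (Finset (Fin n))) (Inv : S → Prop) (h0 : Inv s0)
    (hm : ∀ s W, Inv s → act s = RWEAction.memTest W → Inv (step s (decide (W ∈ F))))
    (hi : ∀ s Y, Inv s → act s = RWEAction.incl Y →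
      Inv (step s (decide (∃ W ∈ F, W ⊆ Y))) ∧ Inv (step s false)) (ω : ℕ → Bool) (m : ℕ) :
    Inv ((RWErun (LVsig act step s0) F ω m).1.foldl step s0) := by
  induction m with
  | zero => exact h0
  | succ m ih =>
    rw [RWErun]
    rcases hact : LVsig act step s0 (RWErun (LVsig act step s0) F ω m).1 with Y | W | W
    · simp only [List.foldl_append, List.foldl_cons, List.foldl_nil]
      obtain ⟨h1, h2⟩ := hi _ Y ih hact
      cases ω (RWErun (LVsig act step s0) F ω m).2
      · simpa using h1
      · simpa using h2
    · simp only [List.foldl_append, List.foldl_cons, List.foldl_nil]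
      exact hm _ W ih hact
    · exact ih

theorem LV_main {n : ℕ} {S : Type} (act : S → RWEAction n) (step : S → Bool → S) (s0 : S)
    (F : Finset (Finset (Fin n))) (p : ℝ) (μ : Measure (ℕ → Bool)) [IsProbabilityMeasure μ]
    (hp0 : 0 ≤ p) (hp1 : p ≤ 1)
    (hμ : ∀ (s : Finset ℕ) (v : ℕ → Bool),
                  μ {ω | ∀ j ∈ s, ω j = v j} =
                    ∏ j ∈ s, ENNReal.ofReal (if v j then p else 1 - p))
    (Inv : S → Prop) (Φ : S → ℝ) (h0 : Inv s0) (hΦ : ∀ s, Inv s → 0 ≤ Φ s)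
    (hh : ∀ s W, Inv s → act s = RWEAction.halt W → W ∈ F)
    (hm : ∀ s W, Inv s → act s = RWEAction.memTest W →
      Inv (step s (decide (W ∈ F))) ∧ 1 + Φ (step s (decide (W ∈ F))) ≤ Φ s)
    (hi : ∀ s Y, Inv s → act s = RWEAction.incl Y →
      Inv (step s (decide (∃ W ∈ F, W ⊆ Y))) ∧ Inv (step s false) ∧
      1 + (p * Φ (step s false) + (1 - p) * Φ (step s (decide (∃ W ∈ F, W ⊆ Y)))) ≤ Φ s) :
    μ {ω | ∃ (m : ℕ) (W : Finset (Fin n)),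
        LVsig act step s0 (RWErun (LVsig act step s0) F ω m).1 = RWEAction.halt W ∧ W ∈ F} = 1 ∧
      ∫⁻ ω, (⨅ (m : ℕ) (_ : ∃ W : Finset (Fin n),
          LVsig act step s0 (RWErun (LVsig act step s0) F ω m).1 = RWEAction.halt W),
            (m : ENNReal)) ∂μ ≤ ENNReal.ofReal (Φ s0) := by
  have hmeas : ∀ N, Measurable (fun ω => (LVH act step F N s0 ω : ENNReal)) := fun N =>
    (measurable_from_top (f := fun k : ℕ => (k : ENNReal))).comp (LVH_meas act step F N s0)
  have hlink : ∀ ω N, LVH act step F N s0 ω < N → ∃ W,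
      LVsig act step s0 (RWErun (LVsig act step s0) F ω (LVH act step F N s0 ω)).1
        = RWEAction.halt W := by
    intro ω N h
    have := LV_link act step s0 F ω N 0
    simp only [RWErun, List.foldl_nil, Nat.add_zero, Nat.zero_add] at this
    exact this h
  have hsup : ∀ ω, (∀ N, ¬ LVH act step F N s0 ω < N) →
      ⨆ N, (LVH act step F N s0 ω : ENNReal) = ⊤ := by
    intro ω H
    rw [eq_top_iff, ← ENNReal.iSup_natCast]
    apply iSup_mono
    intro N
    exact_mod_cast not_lt.1 (H N)
  have hint : ∫⁻ ω, ⨆ N, (LVH act step F N s0 ω : ENNReal) ∂μ ≤ ENNReal.ofReal (Φ s0) := by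
    rw [lintegral_iSup hmeas]
    · exact iSup_le fun N => LV_bound act step F p μ hp0 hp1 hμ Inv Φ hΦ hm hi N s0 h0
    · refine monotone_nat_of_le_succ fun N ω => ?_
      exact_mod_cast LVH_le_succ act step F N s0 ω
  constructor
  · have hae : ∀ᵐ ω ∂μ, ⨆ N, (LVH act step F N s0 ω : ENNReal) < ⊤ :=
      ae_lt_top (Measurable.iSup hmeas) (ne_top_of_le_ne_top ENNReal.ofReal_ne_top hint)
    have : ∀ᵐ ω ∂μ, ω ∈ {ω | ∃ (m : ℕ) (W : Finset (Fin n)),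
        LVsig act step s0 (RWErun (LVsig act step s0) F ω m).1 = RWEAction.halt W ∧ W ∈ F} := by
      filter_upwards [hae] with ω hω
      by_cases H : ∀ N, ¬ LVH act step F N s0 ω < N
      · rw [hsup ω H] at hω
        exact absurd hω (lt_irrefl _)
      · push Not at H
        obtain ⟨N, hN⟩ := H
        obtain ⟨W, hW⟩ := hlink ω N hN
        refine ⟨_, W, hW, ?_⟩
        exact hh _ W (LV_inv act step s0 F Inv h0 (fun s W a b => (hm s W a b).1)
          (fun s Y a b => ⟨(hi s Y a b).1, (hi s Y a b).2.1⟩) ω _) hW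
    have h2 := measure_congr (Filter.eventuallyEq_univ.2 this)
    rw [measure_univ] at h2
    exact h2
  · refine le_trans (lintegral_mono fun ω => ?_) hint
    by_cases H : ∀ N, ¬ LVH act step F N s0 ω < N
    · simp only [hsup ω H]; exact le_top
    · push Not at H
      obtain ⟨N, hN⟩ := H
      refine le_trans (iInf₂_le (LVH act step F N s0 ω) (hlink ω N hN)) ?_
      exact le_iSup (fun N => (LVH act step F N s0 ω : ENNReal)) N


def LVhit {n : ℕ} (F : Finset (Finset (Fin n))) (A : Finset (Fin n)) : Prop := ∃ W ∈ F, W ⊆ A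

instance {n : ℕ} (F : Finset (Finset (Fin n))) (A : Finset (Fin n)) : Decidable (LVhit F A) :=
  inferInstanceAs (Decidable (∃ W ∈ F, W ⊆ A))

theorem LVhit_mono {n : ℕ} {F : Finset (Finset (Fin n))} {A B : Finset (Fin n)} (h : A ⊆ B)
    (hA : LVhit F A) : LVhit F B := by
  obtain ⟨W, hW, hs⟩ := hA
  exact ⟨W, hW, hs.trans h⟩

def LVE {n : ℕ} (F : Finset (Finset (Fin n))) (f : Fin n → ℕ) (Y : Finset (Fin n))
    (Q : Finset ℕ) : ℕ :=
  ((Y.image f \ Q).filter (fun c => ¬ LVhit F (Y.filter (fun x => f x ≠ c)))).card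

def LVU {n : ℕ} (F : Finset (Finset (Fin n))) (Y : Finset (Fin n)) : Finset (Fin n) :=
  Y.filter (fun x => LVhit F (Y.erase x))

noncomputable def LVW {n : ℕ} (F : Finset (Finset (Fin n))) (f : Fin n → ℕ) (Y : Finset (Fin n))
    (Q : Finset ℕ) (a b : ℝ) : ℝ :=
  ∑ x ∈ LVU F Y, if f x ∈ Q then a else b

theorem LVE_le {n : ℕ} (F : Finset (Finset (Fin n))) (f : Fin n → ℕ) (Y : Finset (Fin n))
    (Q : Finset ℕ) (k : ℕ) (hk : ∀ W ∈ F, W.card ≤ k) (hY : LVhit F Y) : LVE F f Y Q ≤ k := by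
  obtain ⟨W, hW, hs⟩ := hY
  refine le_trans ?_ (hk W hW)
  refine le_trans (Finset.card_le_card ?_) (Finset.card_image_le (s := W) (f := f))
  intro c hc
  rw [Finset.mem_filter] at hc
  by_contra h
  apply hc.2
  refine ⟨W, hW, fun x hx => ?_⟩
  rw [Finset.mem_filter]
  refine ⟨hs hx, fun he => h ?_⟩
  rw [← he]
  exact Finset.mem_image_of_mem _ hx

theorem LVP_yes {n : ℕ} (f : Fin n → ℕ) (Y : Finset (Fin n)) (Q : Finset ℕ) (c : ℕ) (hc : c ∈ Q) :
    (Y.filter (fun x => f x ≠ c)).image f \ Q.erase c = Y.image f \ Q := by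
  ext d
  simp only [Finset.mem_sdiff, Finset.mem_image, Finset.mem_filter, Finset.mem_erase]
  constructor
  · rintro ⟨⟨x, ⟨hx, hxc⟩, rfl⟩, h⟩
    exact ⟨⟨x, hx, rfl⟩, fun hq => h ⟨hxc, hq⟩⟩
  · rintro ⟨⟨x, hx, rfl⟩, h⟩
    exact ⟨⟨x, ⟨hx, fun e => h (e ▸ hc)⟩, rfl⟩, fun hq => h hq.2⟩

theorem LVP_no {n : ℕ} (f : Fin n → ℕ) (Y : Finset (Fin n)) (Q : Finset ℕ) (c : ℕ) (hc : c ∈ Q)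
    (hQ : Q ⊆ Y.image f) :
    Y.image f \ Q.erase c = insert c (Y.image f \ Q) := by
  have := hQ hc
  ext d
  simp only [Finset.mem_sdiff, Finset.mem_erase, Finset.mem_insert]
  by_cases h : d = c
  · subst h; simp [this]
  · simp [h]

theorem LVE_yes {n : ℕ} (F : Finset (Finset (Fin n))) (f : Fin n → ℕ) (Y : Finset (Fin n))
    (Q : Finset ℕ) (c : ℕ) (hc : c ∈ Q) :
    LVE F f Y Q ≤ LVE F f (Y.filter (fun x => f x ≠ c)) (Q.erase c) := by
  unfold LVE
  rw [LVP_yes f Y Q c hc]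
  refine Finset.card_le_card ?_
  intro d hd
  rw [Finset.mem_filter] at hd ⊢
  refine ⟨hd.1, fun h => hd.2 (LVhit_mono ?_ h)⟩
  exact Finset.filter_subset_filter _ (Finset.filter_subset _ _)

theorem LVE_no {n : ℕ} (F : Finset (Finset (Fin n))) (f : Fin n → ℕ) (Y : Finset (Fin n))
    (Q : Finset ℕ) (c : ℕ) (hc : c ∈ Q) (hQ : Q ⊆ Y.image f) :
    LVE F f Y (Q.erase c) = LVE F f Y Q +
      if LVhit F (Y.filter (fun x => f x ≠ c)) then 0 else 1 := by
  unfold LVE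
  rw [LVP_no f Y Q c hc hQ, Finset.filter_insert]
  split_ifs with h1
  · rfl
  · rw [Finset.card_insert_of_notMem]
    simp [hc]

theorem LVU_mono {n : ℕ} (F : Finset (Finset (Fin n))) {Y Z : Finset (Fin n)} (h : Y ⊆ Z) :
    LVU F Y ⊆ LVU F Z := by
  intro x hx
  unfold LVU at *
  rw [Finset.mem_filter] at *
  exact ⟨h hx.1, LVhit_mono (Finset.erase_subset_erase _ h) hx.2⟩

theorem LVW_nonneg {n : ℕ} (F : Finset (Finset (Fin n))) (f : Fin n → ℕ) (Y : Finset (Fin n))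
    (Q : Finset ℕ) (a b : ℝ) (ha : 0 ≤ a) (hb : 0 ≤ b) : 0 ≤ LVW F f Y Q a b := by
  unfold LVW
  refine Finset.sum_nonneg fun x _ => ?_
  split_ifs <;> assumption

theorem LVW_no {n : ℕ} (F : Finset (Finset (Fin n))) (f : Fin n → ℕ) (Y : Finset (Fin n))
    (Q : Finset ℕ) (a b : ℝ) (c : ℕ) (hc : c ∈ Q) :
    LVW F f Y (Q.erase c) a b = LVW F f Y Q a b +
      (b - a) * ((LVU F Y).filter (fun x => f x = c)).card := by
  unfold LVW
  rw [Finset.card_filter, Nat.cast_sum, Finset.mul_sum, ← Finset.sum_add_distrib]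
  refine Finset.sum_congr rfl fun x _ => ?_
  by_cases h : f x = c
  · simp [h, hc]
  · simp [h]

theorem LVW_yes {n : ℕ} (F : Finset (Finset (Fin n))) (f : Fin n → ℕ) (Y : Finset (Fin n))
    (Q : Finset ℕ) (a b : ℝ) (ha : 0 ≤ a) (hb : 0 ≤ b) (c : ℕ) (hc : c ∈ Q) :
    LVW F f (Y.filter (fun x => f x ≠ c)) (Q.erase c) a b ≤ LVW F f Y Q a b -
      a * ((LVU F Y).filter (fun x => f x = c)).card := by
  unfold LVW
  rw [Finset.card_filter, Nat.cast_sum, Finset.mul_sum, ← Finset.sum_sub_distrib]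
  have e : ∀ x ∈ LVU F (Y.filter (fun x => f x ≠ c)), (if f x ∈ Q.erase c then a else b) =
      ((if f x ∈ Q then a else b) - a * ((if f x = c then 1 else 0 : ℕ) : ℝ)) := by
    intro x hx
    have : f x ≠ c := by
      unfold LVU at hx
      simp only [Finset.mem_filter] at hx
      exact hx.1.2
    simp [this]
  rw [Finset.sum_congr rfl e]
  refine Finset.sum_le_sum_of_subset_of_nonneg (LVU_mono F (Finset.filter_subset _ _)) ?_
  intro x _ _
  by_cases h : f x = c
  · simp [h, hc]
  · simp only [h, if_false]
    split_ifs <;> simp [ha, hb]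

theorem LVU_inj {n : ℕ} (F : Finset (Finset (Fin n))) (f : Fin n → ℕ) (Y : Finset (Fin n))
    (c : ℕ) (hf : Function.Injective f) (h : ¬ LVhit F (Y.filter (fun x => f x ≠ c))) :
    ((LVU F Y).filter (fun x => f x = c)).card = 0 := by
  rw [Finset.card_eq_zero, Finset.filter_eq_empty_iff]
  intro x hx he
  unfold LVU at hx
  rw [Finset.mem_filter] at hx
  apply h
  refine LVhit_mono ?_ hx.2
  intro y hy
  rw [Finset.mem_erase] at hy
  rw [Finset.mem_filter]
  refine ⟨hy.2, fun hh => hy.1 (hf (hh.trans he.symm))⟩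

theorem LVU_pos {n : ℕ} (F : Finset (Finset (Fin n))) (Y : Finset (Fin n)) (hY : LVhit F Y)
    (hn : Y ∉ F) : 1 ≤ (LVU F Y).card := by
  obtain ⟨W, hW, hs⟩ := hY
  have : ∃ x ∈ Y, x ∉ W := by
    by_contra h
    push Not at h
    exact hn ((Finset.Subset.antisymm hs h) ▸ hW)
  obtain ⟨x, hx, hxW⟩ := this
  refine Finset.card_pos.2 ⟨x, ?_⟩
  unfold LVU
  rw [Finset.mem_filter]
  exact ⟨hx, W, hW, fun y hy => Finset.mem_erase.2 ⟨fun e => hxW (e ▸ hy), hs hy⟩⟩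

inductive LVS (n : ℕ) where
  | run (l : ℕ) (Y : Finset (Fin n)) (Q : Finset ℕ)
  | done (Y : Finset (Fin n))

def LVf {n : ℕ} (L l : ℕ) (x : Fin n) : ℕ := x.val / 2 ^ (L - l)

theorem LVf_inj {n : ℕ} (L l : ℕ) (h : L ≤ l) : Function.Injective (LVf (n := n) L l) := by
  intro x y hxy
  unfold LVf at hxy
  rw [Nat.sub_eq_zero_of_le h] at hxy
  simpa [Fin.ext_iff] using hxy

theorem LVf_card {n : ℕ} (L l : ℕ) (Y : Finset (Fin n)) :
    (Y.image (LVf L (l + 1))).card ≤ 2 * (Y.image (LVf L l)).card := by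
  by_cases h : L ≤ l
  · have : LVf (n := n) L (l + 1) = LVf L l := by
      funext x; unfold LVf; congr 2; omega
    rw [this]; omega
  · have hsub : Y.image (LVf L (l + 1)) ⊆
      (Y.image (LVf L l)).image (fun d => 2 * d) ∪
        (Y.image (LVf L l)).image (fun d => 2 * d + 1) := by
      intro c hc
      obtain ⟨x, hx, rfl⟩ := Finset.mem_image.1 hc
      have e : LVf L l x = LVf L (l + 1) x / 2 := by
        unfold LVf
        rw [Nat.div_div_eq_div_mul, ← pow_succ]
        congr 2; omega
      have hm : LVf L l x ∈ Y.image (LVf L l) := Finset.mem_image_of_mem _ hx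
      rw [Finset.mem_union, Finset.mem_image, Finset.mem_image]
      rcases Nat.mod_two_eq_zero_or_one (LVf L (l + 1) x) with h0 | h0
      · exact Or.inl ⟨_, hm, by rw [e]; omega⟩
      · exact Or.inr ⟨_, hm, by rw [e]; omega⟩
    have h1 := Finset.card_le_card hsub
    have h2 := Finset.card_union_le ((Y.image (LVf L l)).image (fun d => 2 * d))
      ((Y.image (LVf L l)).image (fun d => 2 * d + 1))
    have h3 := Finset.card_image_le (s := Y.image (LVf L l)) (f := fun d => 2 * d)
    have h4 := Finset.card_image_le (s := Y.image (LVf L l)) (f := fun d => 2 * d + 1)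
    omega

def LVinit (n L : ℕ) : LVS n := LVS.run 0 Finset.univ ((Finset.univ : Finset (Fin n)).image (LVf L 0))

def LVact {n : ℕ} (L : ℕ) : LVS n → RWEAction n
  | LVS.run l Y Q =>
    if h : Q.Nonempty then RWEAction.incl (Y.filter (fun x => LVf L l x ≠ Q.min' h))
    else RWEAction.memTest Y
  | LVS.done Y => RWEAction.halt Y

def LVstep {n : ℕ} (L M : ℕ) : LVS n → Bool → LVS n
  | LVS.run l Y Q, b =>
    if h : Q.Nonempty then
      if b = true then LVS.run l (Y.filter (fun x => LVf L l x ≠ Q.min' h)) (Q.erase (Q.min' h))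
      else LVS.run l Y (Q.erase (Q.min' h))
    else if b = true then LVS.done Y
    else if l + 1 < M then LVS.run (l + 1) Y (Y.image (LVf L (l + 1)))
    else LVinit n L
  | LVS.done Y, _ => LVS.done Y

noncomputable def LVe (L T : ℕ) (D : ℝ) (l : ℕ) : ℝ := D * 4 ^ (l - L) / 4 ^ T

noncomputable def LVPhi {n : ℕ} (F : Finset (Finset (Fin n))) (k L T : ℕ) (D : ℝ) : LVS n → ℝ
  | LVS.run l Y Q =>
    3 * (k * ((L + T : ℕ) - l) - LVE F (LVf L l) Y Q) + 2 * Q.card +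
      4 * (Y.image (LVf L l) \ Q).card + ((L + T : ℕ) - l)
      + LVW F (LVf L l) Y Q (LVe L T D l) (LVe L T D (l + 1))
  | LVS.done _ => 0

def LVInv {n : ℕ} (F : Finset (Finset (Fin n))) (L M : ℕ) : LVS n → Prop
  | LVS.run l Y Q => l < M ∧ LVhit F Y ∧ Q ⊆ Y.image (LVf L l)
  | LVS.done Y => Y ∈ F

theorem LVe_nonneg (L T : ℕ) (D : ℝ) (hD : 0 ≤ D) (l : ℕ) : 0 ≤ LVe L T D l := by
  unfold LVe; positivity

theorem LVe_lt (L T : ℕ) (D : ℝ) (l : ℕ) (h : l < L) : LVe L T D (l + 1) = LVe L T D l := by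
  unfold LVe
  rw [show l + 1 - L = l - L by omega]

theorem LVe_le (L T : ℕ) (D : ℝ) (hD : 0 ≤ D) (l : ℕ) : LVe L T D (l + 1) ≤ 4 * LVe L T D l := by
  by_cases h : l < L
  · rw [LVe_lt L T D l h]; linarith [LVe_nonneg L T D hD l]
  · unfold LVe
    rw [show l + 1 - L = (l - L) + 1 by omega, pow_succ]
    apply le_of_eq; ring

theorem LVPhi_nonneg {n : ℕ} (F : Finset (Finset (Fin n))) (k L T : ℕ) (D : ℝ) (hD : 0 ≤ D)
    (hk : ∀ W ∈ F, W.card ≤ k) (l : ℕ) (Y : Finset (Fin n)) (Q : Finset ℕ)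
    (hs : LVInv F L (L + T) (LVS.run l Y Q)) :
    1 + LVW F (LVf L l) Y Q (LVe L T D l) (LVe L T D (l + 1)) ≤
      LVPhi F k L T D (LVS.run l Y Q) := by
  obtain ⟨h1, h2, h3⟩ := hs
  have hE : (LVE F (LVf L l) Y Q : ℝ) ≤ k := by exact_mod_cast LVE_le F (LVf L l) Y Q k hk h2
  have hl : (1 : ℝ) ≤ (L + T : ℕ) - l := by
    have : (l : ℝ) + 1 ≤ (L + T : ℕ) := by exact_mod_cast h1
    linarith
  have : (k : ℝ) * 1 ≤ k * ((L + T : ℕ) - l) := by gcongr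
  have hq : (0 : ℝ) ≤ Q.card := by positivity
  have hq2 : (0 : ℝ) ≤ (Y.image (LVf L l) \ Q).card := by positivity
  simp only [LVPhi]
  linarith

theorem LVInv_init {n : ℕ} (F : Finset (Finset (Fin n))) (hF : F.Nonempty) (L M : ℕ) (hM : 0 < M) :
    LVInv F L M (LVinit n L) := by
  obtain ⟨W, hW⟩ := hF
  exact ⟨hM, ⟨W, hW, Finset.subset_univ _⟩, subset_rfl⟩

theorem LVPhi_init {n : ℕ} (F : Finset (Finset (Fin n))) (k L T : ℕ) (D : ℝ) (hD : 0 ≤ D)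
    (hL : n ≤ 2 ^ L) (hT : 2 * n ≤ 4 ^ T)
    (hD2 : 2 * (3 * k * (L + T : ℕ) + 2 + (L + T : ℕ)) ≤ D) :
    LVPhi F k L T D (LVinit n L) ≤ D := by
  have hQ : (((Finset.univ : Finset (Fin n)).image (LVf L 0)).card : ℝ) ≤ 1 := by
    have : (Finset.univ : Finset (Fin n)).image (LVf L 0) ⊆ {0} := by
      intro c hc
      obtain ⟨x, -, rfl⟩ := Finset.mem_image.1 hc
      rw [Finset.mem_singleton]
      unfold LVf
      exact Nat.div_eq_of_lt (lt_of_lt_of_le x.2 hL)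
    exact_mod_cast (Finset.card_le_card this)
  have hW : LVW F (LVf L 0) Finset.univ ((Finset.univ : Finset (Fin n)).image (LVf L 0))
      (LVe L T D 0) (LVe L T D (0 + 1)) ≤ D / 2 := by
    unfold LVW
    have : ∀ x ∈ LVU F Finset.univ, (if LVf L 0 x ∈ (Finset.univ : Finset (Fin n)).image (LVf L 0)
      then (LVe L T D 0) else (LVe L T D (0 + 1))) = LVe L T D 0 := by
      intro x _
      rw [if_pos (Finset.mem_image_of_mem _ (Finset.mem_univ x))]
    rw [Finset.sum_congr rfl this, Finset.sum_const, nsmul_eq_mul]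
    have hc : ((LVU F (Finset.univ : Finset (Fin n))).card : ℝ) ≤ n := by
      have := Finset.card_le_univ (LVU F (Finset.univ : Finset (Fin n)))
      rw [Fintype.card_fin] at this
      exact_mod_cast this
    have hT' : (2 * n : ℝ) ≤ 4 ^ T := by exact_mod_cast hT
    have he : LVe L T D 0 = D / 4 ^ T := by simp [LVe]
    rw [he]
    calc _ ≤ (n : ℝ) * (D / 4 ^ T) := by gcongr
      _ = (n * D) / 4 ^ T := by ring
      _ ≤ D / 2 := by
        rw [div_le_div_iff₀ (by positivity) (by norm_num)]
        nlinarith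
  have hE : (0 : ℝ) ≤ LVE F (LVf L 0) Finset.univ ((Finset.univ : Finset (Fin n)).image (LVf L 0)) := by
    positivity
  simp only [LVPhi, LVinit, Finset.sdiff_self, Finset.card_empty, Nat.cast_zero]
  linarith

theorem LV_incl {n : ℕ} (F : Finset (Finset (Fin n))) (k L T : ℕ) (D p : ℝ) (hD : 0 ≤ D)
    (hp0 : 0 ≤ p) (hp1 : p ≤ 1 / 4) (s : LVS n) (Y : Finset (Fin n))
    (hs : LVInv F L (L + T) s) (ha : LVact L s = RWEAction.incl Y) :
    LVInv F L (L + T) (LVstep L (L + T) s (decide (∃ W ∈ F, W ⊆ Y))) ∧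
    LVInv F L (L + T) (LVstep L (L + T) s false) ∧
      1 + (p * LVPhi F k L T D (LVstep L (L + T) s false) +
        (1 - p) * LVPhi F k L T D (LVstep L (L + T) s (decide (∃ W ∈ F, W ⊆ Y))))
        ≤ LVPhi F k L T D s := by
  rcases s with ⟨l, Z, Q⟩ | Z
  swap
  · simp [LVact] at ha
  by_cases hQ : Q.Nonempty
  swap
  · simp [LVact, hQ] at ha
  obtain ⟨h1, h2, h3⟩ := hs
  simp only [LVact, hQ, dite_true, RWEAction.incl.injEq] at ha
  have hc := Q.min'_mem hQ
  simp only [LVstep, hQ, dite_true]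
  generalize Q.min' hQ = c at ha hc
  subst ha
  have hInvNo : LVInv F L (L + T) (LVS.run l Z (Q.erase c)) :=
    ⟨h1, h2, (Finset.erase_subset _ _).trans h3⟩
  have hcard : ((Q.erase c).card : ℝ) = Q.card - 1 := by
    rw [Finset.card_erase_of_mem hc, Nat.cast_sub (Finset.card_pos.2 hQ)]; simp
  have hPno : ((Z.image (LVf L l) \ Q.erase c).card : ℝ) = (Z.image (LVf L l) \ Q).card + 1 := by
    rw [LVP_no _ _ _ _ hc h3, Finset.card_insert_of_notMem (by simp [hc])]; push_cast; rfl
  have hEno := LVE_no F (LVf L l) Z Q c hc h3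
  have hWno := LVW_no F (LVf L l) Z Q (LVe L T D l) (LVe L T D (l + 1)) c hc
  have he0 := LVe_nonneg L T D hD l
  have he1 := LVe_nonneg L T D hD (l + 1)
  have hee := LVe_le L T D hD l
  have hno : LVPhi F k L T D (LVS.run l Z (Q.erase c)) = LVPhi F k L T D (LVS.run l Z Q) + 2
      - 3 * ((if LVhit F (Z.filter (fun x => LVf L l x ≠ c)) then 0 else 1 : ℕ) : ℝ)
      + (LVe L T D (l + 1) - LVe L T D l) *
        ((LVU F Z).filter (fun x => LVf L l x = c)).card := by
    simp only [LVPhi]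
    rw [hWno, hcard, hPno, hEno, Nat.cast_add (LVE F (LVf L l) Z Q)]
    ring
  by_cases hh : LVhit F (Z.filter (fun x => LVf L l x ≠ c))
  · have hd : decide (∃ W ∈ F, W ⊆ Z.filter (fun x => LVf L l x ≠ c)) = true :=
      decide_eq_true hh
    rw [hd]
    simp only [if_true, Bool.false_eq_true, if_false]
    refine ⟨⟨h1, hh, ?_⟩, hInvNo, ?_⟩
    · intro d hd
      rw [Finset.mem_erase] at hd
      obtain ⟨x, hx, rfl⟩ := Finset.mem_image.1 (h3 hd.2)
      exact Finset.mem_image_of_mem _ (Finset.mem_filter.2 ⟨hx, hd.1⟩)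
    · have hEy : (LVE F (LVf L l) Z Q : ℝ) ≤ _ := Nat.cast_le.2 (LVE_yes F (LVf L l) Z Q c hc)
      have hWy := LVW_yes F (LVf L l) Z Q _ _ he0 he1 c hc
      have hyes : LVPhi F k L T D (LVS.run l (Z.filter (fun x => LVf L l x ≠ c)) (Q.erase c)) ≤
        LVPhi F k L T D (LVS.run l Z Q) - 2 - LVe L T D l *
        ((LVU F Z).filter (fun x => LVf L l x = c)).card := by
        simp only [LVPhi]
        rw [hcard, LVP_yes _ _ _ _ hc]
        linarith
      rw [if_pos hh] at hno
      have hu : (0 : ℝ) ≤ ((LVU F Z).filter (fun x => LVf L l x = c)).card := by positivity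
      generalize (((LVU F Z).filter (fun x => LVf L l x = c)).card : ℝ) = u at *
      generalize LVPhi F k L T D (LVS.run l Z Q) = A at *
      generalize LVPhi F k L T D (LVS.run l (Z.filter (fun x => LVf L l x ≠ c)) (Q.erase c)) = B at *
      rw [hno]
      have t1 : (1 - p) * B ≤ (1 - p) * (A - 2 - LVe L T D l * u) :=
        mul_le_mul_of_nonneg_left hyes (by linarith)
      have t2 : p * LVe L T D (l + 1) ≤ LVe L T D l := by
        calc p * LVe L T D (l + 1) ≤ 1 / 4 * (4 * LVe L T D l) := by gcongr
          _ = _ := by ring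
      have t3 : p * LVe L T D (l + 1) * u ≤ LVe L T D l * u := by gcongr
      push_cast
      nlinarith
  · have hd : decide (∃ W ∈ F, W ⊆ Z.filter (fun x => LVf L l x ≠ c)) = false :=
      decide_eq_false hh
    rw [hd]
    simp only [Bool.false_eq_true, if_false]
    refine ⟨hInvNo, hInvNo, ?_⟩
    have hz : (LVe L T D (l + 1) - LVe L T D l) *
        (((LVU F Z).filter (fun x => LVf L l x = c)).card : ℝ) = 0 := by
      by_cases hl : l < L
      · rw [LVe_lt L T D l hl]; ring
      · rw [LVU_inj F _ Z c (LVf_inj L l (not_lt.1 hl)) hh]; simp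
    rw [hz, if_neg hh] at hno
    rw [hno]
    push_cast
    linarith

theorem LV_mem {n : ℕ} (F : Finset (Finset (Fin n))) (hF : F.Nonempty) (k L T : ℕ) (D : ℝ)
    (hD : 0 ≤ D) (hL : n ≤ 2 ^ L) (hT : 2 * n ≤ 4 ^ T)
    (hD2 : 2 * (3 * k * (L + T : ℕ) + 2 + (L + T : ℕ)) ≤ D)
    (hk : ∀ W ∈ F, W.card ≤ k) (s : LVS n) (W : Finset (Fin n))
    (hs : LVInv F L (L + T) s) (ha : LVact L s = RWEAction.memTest W) :
    LVInv F L (L + T) (LVstep L (L + T) s (decide (W ∈ F))) ∧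
      1 + LVPhi F k L T D (LVstep L (L + T) s (decide (W ∈ F))) ≤ LVPhi F k L T D s := by
  rcases s with ⟨l, Y, Q⟩ | Y
  swap
  · simp [LVact] at ha
  by_cases hQ : Q.Nonempty
  · simp [LVact, hQ] at ha
  have hs' := hs
  obtain ⟨h1, h2, h3⟩ := hs'
  simp only [LVact, hQ, dite_false, RWEAction.memTest.injEq] at ha
  subst ha
  have hpos := LVPhi_nonneg F k L T D hD hk l Y Q hs
  have he0 := LVe_nonneg L T D hD l
  have he1 := LVe_nonneg L T D hD (l + 1)
  have hW0 := LVW_nonneg F (LVf L l) Y Q _ _ he0 he1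
  simp only [LVstep, hQ, dite_false]
  by_cases hY : Y ∈ F
  · simp only [hY, decide_true, if_true]
    refine ⟨hY, ?_⟩
    simp only [LVPhi] at hpos ⊢
    linarith
  · simp only [hY, decide_false, Bool.false_eq_true, if_false]
    rw [Finset.not_nonempty_iff_eq_empty] at hQ
    subst hQ
    by_cases hl : l + 1 < L + T
    · simp only [hl, if_true]
      refine ⟨⟨hl, h2, subset_rfl⟩, ?_⟩
      have hE : (LVE F (LVf L l) Y ∅ : ℝ) ≤ k := by
        exact_mod_cast LVE_le F (LVf L l) Y ∅ k hk h2
      have hE2 : (0 : ℝ) ≤ (LVE F (LVf L (l + 1)) Y (Y.image (LVf L (l + 1))) : ℝ) := by positivity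
      have hc : ((Y.image (LVf L (l + 1))).card : ℝ) ≤ 2 * (Y.image (LVf L l)).card := by
        exact_mod_cast LVf_card L l Y
      have hW : LVW F (LVf L (l + 1)) Y (Y.image (LVf L (l + 1))) (LVe L T D (l + 1))
          (LVe L T D (l + 1 + 1)) = LVW F (LVf L l) Y ∅ (LVe L T D l) (LVe L T D (l + 1)) := by
        unfold LVW
        refine Finset.sum_congr rfl fun x hx => ?_
        unfold LVU at hx
        rw [if_pos (Finset.mem_image_of_mem _ (Finset.mem_filter.1 hx).1)]
        simp
      simp only [LVPhi]
      rw [hW]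
      simp only [Finset.sdiff_self, Finset.card_empty, Nat.cast_zero, Finset.sdiff_empty]
      push_cast
      linarith
    · simp only [hl, if_false]
      refine ⟨LVInv_init F hF L _ (by omega), ?_⟩
      have hi := LVPhi_init F k L T D hD hL hT hD2
      have hu : (1 : ℝ) ≤ (LVU F Y).card := by exact_mod_cast LVU_pos F Y h2 hY
      have hl' : l + 1 = L + T := by omega
      have heD : LVe L T D (l + 1) = D := by
        unfold LVe
        rw [hl', Nat.add_sub_cancel_left]
        field_simp
      have hW : LVW F (LVf L l) Y ∅ (LVe L T D l) (LVe L T D (l + 1)) = (LVU F Y).card * D := by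
        unfold LVW
        simp [heD]
      rw [hW] at hpos
      nlinarith

/-- Theorem 2 / Lemma 3 (Las Vegas extraction). Let `0 ≤ p ≤ 1/4`. There are
an absolute constant `C > 0` and, for each `n ≥ 1`, a deterministic adaptive
strategy `σ` with inclusion queries and membership tests such that for every
`k ≥ 1` and every nonempty family `F` of subsets of `{1,…,n}` with all
members of size at most `k`, the following holds for every probability
measure `μ` on infinite bit sequences under which the bits are independent
Bernoulli(`p`) (expressed by the product formula for cylinder events): when
the `j`-th inclusion query `Y` is answered YES exactly if some `W ∈ F` has
`W ⊆ Y` and the `j`-th bit is `0` (false), and membership tests are answered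
truthfully, `σ` almost surely halts with output a member of `F`, and the
expected total number of actions is at most `C·k·log₂(2n)`. -/
theorem lasVegas_witness_extraction (p : ℝ) (hp0 : 0 ≤ p) (hp1 : p ≤ 1 / 4) :
    ∃ C : ℝ, 0 < C ∧
      ∀ n : ℕ, 1 ≤ n →
        ∃ σ : List Bool → RWEAction n,
          ∀ k : ℕ, 1 ≤ k →
            ∀ F : Finset (Finset (Fin n)), F.Nonempty →
              (∀ W ∈ F, W.card ≤ k) →
              ∀ μ : Measure (ℕ → Bool), IsProbabilityMeasure μ →
                (∀ (s : Finset ℕ) (v : ℕ → Bool),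
                  μ {ω | ∀ j ∈ s, ω j = v j} =
                    ∏ j ∈ s, ENNReal.ofReal (if v j then p else 1 - p)) →
                μ {ω | ∃ (m : ℕ) (W : Finset (Fin n)),
                    σ (RWErun σ F ω m).1 = RWEAction.halt W ∧ W ∈ F} = 1 ∧
                ∫⁻ ω, (⨅ (m : ℕ) (_ : ∃ W : Finset (Fin n),
                    σ (RWErun σ F ω m).1 = RWEAction.halt W), (m : ENNReal)) ∂μ ≤
                  ENNReal.ofReal (C * k * Real.logb 2 (2 * n)) := by
  refine ⟨36, by norm_num, fun n hn => ?_⟩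
  set L := Nat.clog 2 n with hLdef
  have hL : n ≤ 2 ^ L := Nat.le_pow_clog (by norm_num) n
  have hT : 2 * n ≤ 4 ^ (L + 1) := by
    have h4 : (4 : ℕ) ^ (L + 1) = 2 ^ L * 2 ^ L * 4 := by
      rw [show (4 : ℕ) = 2 ^ 2 by norm_num, ← pow_mul]; ring
    rw [h4]
    have : 1 ≤ 2 ^ L := Nat.one_le_two_pow
    nlinarith
  refine ⟨LVsig (LVact L) (LVstep L (L + (L + 1))) (LVinit n L), ?_⟩
  intro k hk F hF hFk μ hμp hμ
  set D : ℝ := 2 * (3 * k * (L + (L + 1) : ℕ) + 2 + (L + (L + 1) : ℕ)) with hDdef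
  have hD : 0 ≤ D := by positivity
  have hm := LV_main (LVact L) (LVstep L (L + (L + 1))) (LVinit n L) F p μ hp0 (by linarith) hμ
    (LVInv F L (L + (L + 1))) (LVPhi F k L (L + 1) D) (LVInv_init F hF L _ (by omega))
    (by
      intro s hs
      rcases s with ⟨l, Y, Q⟩ | Y
      · have := LVPhi_nonneg F k L (L + 1) D hD hFk l Y Q hs
        have hW0 := LVW_nonneg F (LVf L l) Y Q _ _ (LVe_nonneg L (L + 1) D hD l)
          (LVe_nonneg L (L + 1) D hD (l + 1))
        linarith
      · exact le_refl _)
    (by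
      intro s W hs ha
      rcases s with ⟨l, Y, Q⟩ | Y
      · by_cases hQ : Q.Nonempty <;> simp [LVact, hQ] at ha
      · simp only [LVact, RWEAction.halt.injEq] at ha
        subst ha
        exact hs)
    (fun s W hs ha => LV_mem F hF k L (L + 1) D hD hL hT le_rfl hFk s W hs ha)
    (fun s Y hs ha => LV_incl F k L (L + 1) D p hD hp0 hp1 s Y hs ha)
  refine ⟨hm.1, hm.2.trans (ENNReal.ofReal_le_ofReal ?_)⟩
  refine (LVPhi_init F k L (L + 1) D hD hL hT le_rfl).trans ?_
  have hk' : (1 : ℝ) ≤ k := by exact_mod_cast hk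
  have hn' : (1 : ℝ) ≤ n := by exact_mod_cast hn
  have hlog : (L : ℝ) ≤ Real.logb 2 (2 * n) := by
    rw [Real.le_logb_iff_rpow_le (by norm_num) (by positivity), Real.rpow_natCast]
    rcases Nat.eq_zero_or_pos L with h0 | h0
    · rw [h0]; simp; linarith
    · have h1 : 2 ^ (L - 1) < n := by
        refine (Nat.lt_clog_iff_pow_lt (by norm_num)).1 ?_
        omega
      have h2 : 2 ^ L = 2 * 2 ^ (L - 1) := by
        rw [← pow_succ']; congr 1; omega
      have : 2 ^ L ≤ 2 * n := by omega
      exact_mod_cast this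
  have hlog1 : (1 : ℝ) ≤ Real.logb 2 (2 * n) := by
    rw [Real.le_logb_iff_rpow_le (by norm_num) (by positivity)]
    simp; linarith
  generalize Real.logb 2 (2 * n) = X at *
  rw [hDdef]
  push_cast
  have hM : (L : ℝ) + (L + 1) ≤ 3 * X := by linarith
  have hkX : (k : ℝ) * ((L : ℝ) + (L + 1)) ≤ k * (3 * X) := by gcongr
  have hX : 1 * X ≤ k * X := by gcongr
  linarith
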